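/- arXiv:2304.13332 — 2 statements merged into one kernel-verified Lean document; each statement's English description precedes it below -/
import Mathlib

section
/- Let K be a compact subset of a real Hilbert space X and suppose there exist s > 1/2 and M > 0 with d_n(K) ≤ M n^{−s} for all n ≥ 1. Then for any γ ∈ (0,1] and any sequence produced by the weak greedy algorithm with parameter γ, there is a constant C (depending on s, M, γ but not on n) such that σ_n(K) ≤ C n^{1/2 − s} for all n ≥ 1. -/
open scoped RealInnerProductSpace

/-- Dyadic entropy number: infimum of all `ε > 0` such that `K` is covered by `2^n`
balls of radius `ε`. -/
noncomputable def entropyNumber {X : Type*} [NormedAddCommGroup X] (n : ℕ) (K : Set X) : ℝ :=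
  sInf {ε : ℝ | 0 < ε ∧ ∃ c : Fin (2 ^ n) → X, K ⊆ ⋃ i, Metric.closedBall (c i) ε}

/-- Symmetric (absolutely) convex hull: closure of the set of finite sums `∑ cᵢ gᵢ`
with `gᵢ ∈ K` and `∑ |cᵢ| ≤ 1`. -/
noncomputable def symConvexHull {X : Type*} [NormedAddCommGroup X] [NormedSpace ℝ X]
    (K : Set X) : Set X :=
  closure {x : X | ∃ (m : ℕ) (c : Fin m → ℝ) (g : Fin m → X),
    (∀ i, g i ∈ K) ∧ (∑ i, |c i|) ≤ 1 ∧ x = ∑ i, c i • g i}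

/-- Volume of the unit Euclidean ball in `ℝⁿ`. -/
noncomputable def unitBallVol (n : ℕ) : ℝ :=
  Real.pi ^ ((n : ℝ) / 2) / Real.Gamma ((n : ℝ) / 2 + 1)

/-- Span of the first `n` terms of a sequence. -/
noncomputable def spanFirst {X : Type*} [NormedAddCommGroup X] [NormedSpace ℝ X]
    (f : ℕ → X) (n : ℕ) : Submodule ℝ X :=
  Submodule.span ℝ (f '' {i | i < n})

/-- The weak greedy algorithm with parameter `γ`: `f n` (the `(n+1)`-st iterate) lies in `K`
and its distance to the span of the previous iterates is at least `γ` times that of any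
other element of `K`. -/
def IsWeakGreedy {X : Type*} [NormedAddCommGroup X] [NormedSpace ℝ X]
    (γ : ℝ) (K : Set X) (f : ℕ → X) : Prop :=
  ∀ n : ℕ, f n ∈ K ∧ ∀ g ∈ K,
    γ * Metric.infDist g (spanFirst f n : Set X) ≤ Metric.infDist (f n) (spanFirst f n : Set X)

/-- The greedy error `σ_n(K) = sup_{f ∈ K} dist(f, span{f_1,…,f_n})`. -/
noncomputable def greedyError {X : Type*} [NormedAddCommGroup X] [NormedSpace ℝ X]
    (K : Set X) (f : ℕ → X) (n : ℕ) : ℝ :=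
  sSup ((fun g => Metric.infDist g (spanFirst f n : Set X)) '' K)

/-- Kolmogorov `n`-width. -/
noncomputable def kolmogorovWidth {X : Type*} [NormedAddCommGroup X] [NormedSpace ℝ X]
    (n : ℕ) (K : Set X) : ℝ :=
  sInf {d : ℝ | ∃ Y : Submodule ℝ X, FiniteDimensional ℝ Y ∧ Module.finrank ℝ Y ≤ n ∧
    d = sSup ((fun g => Metric.infDist g (Y : Set X)) '' K)}

/-- `f` admits an `ℓ¹` representation over the dictionary `D`. -/
def HasL1Rep {X : Type*} [NormedAddCommGroup X] [NormedSpace ℝ X] (D : Set X) (f : X) : Prop :=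
  ∃ (c : ℕ → ℝ) (g : ℕ → X), (∀ i, g i ∈ D) ∧ Summable (fun i => |c i|) ∧
    HasSum (fun i => c i • g i) f

/-- The variation norm `‖f‖_{L₁(D)}`. -/
noncomputable def varNorm {X : Type*} [NormedAddCommGroup X] [NormedSpace ℝ X]
    (D : Set X) (f : X) : ℝ :=
  sInf {t : ℝ | ∃ (c : ℕ → ℝ) (g : ℕ → X), (∀ i, g i ∈ D) ∧ Summable (fun i => |c i|) ∧
    HasSum (fun i => c i • g i) f ∧ t = ∑' i, |c i|}

/-- The orthogonal greedy algorithm with target `f`: `fa 0 = 0`; at each step `g n ∈ D`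
maximizes `|⟨g, f - fa n⟩|` over `D`, and `fa (n+1)` is the orthogonal projection of `f`
onto `span{g 0, …, g n}`. -/
def IsOGA {X : Type*} [NormedAddCommGroup X] [InnerProductSpace ℝ X]
    (D : Set X) (f : X) (g fa : ℕ → X) : Prop :=
  fa 0 = 0 ∧ ∀ n : ℕ,
    g n ∈ D ∧ (∀ h ∈ D, |⟪h, f - fa n⟫| ≤ |⟪g n, f - fa n⟫|) ∧
    fa (n + 1) ∈ Submodule.span ℝ (g '' {i | i ≤ n}) ∧
    ∀ w ∈ Submodule.span ℝ (g '' {i | i ≤ n}), ⟪f - fa (n + 1), w⟫ = 0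

/-- Best `n`-term approximation error `E_n(f, D)`. -/
noncomputable def bestNTermError {X : Type*} [NormedAddCommGroup X] [NormedSpace ℝ X]
    (D : Set X) (n : ℕ) (f : X) : ℝ :=
  sInf {r : ℝ | ∃ (c : Fin n → ℝ) (g : Fin n → X), (∀ i, g i ∈ D) ∧ r = ‖f - ∑ i, c i • g i‖}

/-- The K-functional `K(t, g)` between `X` and `L₁(D)`. -/
noncomputable def Kfunctional {X : Type*} [NormedAddCommGroup X] [NormedSpace ℝ X]
    (D : Set X) (t : ℝ) (gg : X) : ℝ :=
  sInf {s : ℝ | ∃ h : X, HasL1Rep D h ∧ s = ‖gg - h‖ + t * varNorm D h}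

/-- The interpolation norm `‖g‖_θ = sup_{t > 0} t^{-θ} K(t, g)`. -/
noncomputable def interpNorm {X : Type*} [NormedAddCommGroup X] [NormedSpace ℝ X]
    (D : Set X) (θ : ℝ) (gg : X) : ℝ :=
  sSup ((fun t => t ^ (-θ) * Kfunctional D t gg) '' Set.Ioi (0 : ℝ))

section Projection

variable {X : Type*} [NormedAddCommGroup X] [InnerProductSpace ℝ X]

lemma norm_sub_starProjection_eq_infDist (U : Submodule ℝ X) [U.HasOrthogonalProjection] (x : X) :
    ‖x - U.starProjection x‖ = Metric.infDist x (U : Set X) := by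
  rw [Submodule.starProjection_minimal, Metric.infDist_eq_iInf]
  simp only [dist_eq_norm]
  rfl

/-- The squared norms of the projections of an orthonormal family onto `W` sum to at most
`dim W`. -/
lemma Orthonormal.sum_sq_norm_starProjection_le {ι : Type*} [Fintype ι] {e : ι → X}
    (he : Orthonormal ℝ e) (W : Submodule ℝ X) [FiniteDimensional ℝ W] :
    ∑ i, ‖W.starProjection (e i)‖ ^ 2 ≤ Module.finrank ℝ W := by
  let b := stdOrthonormalBasis ℝ W
  have key (i : ι) : ‖W.starProjection (e i)‖ ^ 2 = ∑ j, ‖⟪e i, (b j : X)⟫‖ ^ 2 := by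
    have h := b.sum_sq_norm_inner_right (W.orthogonalProjectionOnto (e i))
    rw [Submodule.starProjection_apply, ← Submodule.coe_norm, ← h]
    refine Finset.sum_congr rfl fun j _ => ?_
    rw [real_inner_comm (b j : X)]
    simp
  calc ∑ i, ‖W.starProjection (e i)‖ ^ 2
      = ∑ j, ∑ i, ‖⟪e i, (b j : X)⟫‖ ^ 2 := by
        rw [Finset.sum_comm]
        exact Finset.sum_congr rfl fun i _ => key i
    _ ≤ ∑ j, ‖(b j : X)‖ ^ 2 := Finset.sum_le_sum fun j _ => he.sum_inner_products_le _
    _ = Module.finrank ℝ W := by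
        have hb (j) : ‖(b j : X)‖ = 1 := b.orthonormal.1 j
        simp [hb]

/-- Trace estimate: vectors of norm at most `R` lying within `δ` of a subspace `W` cannot correlate
strongly with an orthonormal family that is much larger than `dim W`. -/
lemma Orthonormal.sum_inner_le {ι : Type*} [Fintype ι] {e : ι → X} (he : Orthonormal ℝ e)
    (W : Submodule ℝ X) [FiniteDimensional ℝ W] {h : ι → X} {R δ : ℝ} (hR₀ : 0 ≤ R)
    (hR : ∀ i, ‖h i‖ ≤ R) (hδ : ∀ i, ∃ w ∈ W, ‖h i - w‖ ≤ δ) :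
    ∑ i, ⟪h i, e i⟫ ≤
      R * √(Fintype.card ι * Module.finrank ℝ W) + Fintype.card ι * δ := by
  have term (i : ι) : ⟪h i, e i⟫ ≤ R * ‖W.starProjection (e i)‖ + δ := by
    obtain ⟨w, hw, hwδ⟩ := hδ i
    have hdist : ‖h i - W.starProjection (h i)‖ ≤ δ := by
      rw [norm_sub_starProjection_eq_infDist]
      exact (Metric.infDist_le_dist_of_mem hw).trans (by rwa [dist_eq_norm])
    have hsplit : ⟪h i, e i⟫ =
        ⟪h i, W.starProjection (e i)⟫ + ⟪h i - W.starProjection (h i), e i⟫ := by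
      rw [← Submodule.inner_starProjection_left_eq_right, ← inner_add_left, add_sub_cancel]
    rw [hsplit]
    refine add_le_add ((real_inner_le_norm _ _).trans ?_) ((real_inner_le_norm _ _).trans ?_)
    · exact mul_le_mul_of_nonneg_right (hR i) (norm_nonneg _)
    · rwa [he.1 i, mul_one]
  have hcs : ∑ i, ‖W.starProjection (e i)‖ ≤ √(Fintype.card ι * Module.finrank ℝ W) := by
    apply Real.le_sqrt_of_sq_le
    refine sq_sum_le_card_mul_sum_sq.trans ?_
    rw [Finset.card_univ]
    exact mul_le_mul_of_nonneg_left (he.sum_sq_norm_starProjection_le W) (Nat.cast_nonneg _)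
  calc ∑ i, ⟪h i, e i⟫ ≤ ∑ i, (R * ‖W.starProjection (e i)‖ + δ) :=
        Finset.sum_le_sum fun i _ => term i
    _ = R * ∑ i, ‖W.starProjection (e i)‖ + Fintype.card ι * δ := by
        rw [Finset.sum_add_distrib, ← Finset.mul_sum]; simp
    _ ≤ _ := by gcongr

end Projection

section Greedy

variable {X : Type*} [NormedAddCommGroup X]

section NormedSpace

variable [NormedSpace ℝ X] {K : Set X} {f : ℕ → X} {γ : ℝ}

instance finiteDimensional_spanFirst (f : ℕ → X) (n : ℕ) :
    FiniteDimensional ℝ (spanFirst f n) :=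
  FiniteDimensional.span_of_finite ℝ ((Set.finite_lt_nat n).image f)

lemma spanFirst_mono (f : ℕ → X) : Monotone (spanFirst f) := fun _ _ hmn =>
  Submodule.span_mono (Set.image_mono fun _ hi => lt_of_lt_of_le hi hmn)

lemma mem_spanFirst (f : ℕ → X) {i n : ℕ} (h : i < n) : f i ∈ spanFirst f n :=
  Submodule.subset_span ⟨i, h, rfl⟩

lemma IsCompact.infDist_le_sSup (hK : IsCompact K) (Y : Submodule ℝ X) {g : X} (hg : g ∈ K) :
    Metric.infDist g (Y : Set X) ≤ sSup ((fun g => Metric.infDist g (Y : Set X)) '' K) :=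
  le_csSup (hK.image (Metric.continuous_infDist_pt _)).bddAbove ⟨g, hg, rfl⟩

lemma greedyError_nonneg (K : Set X) (f : ℕ → X) (n : ℕ) : 0 ≤ greedyError K f n :=
  Real.sSup_nonneg (by rintro _ ⟨g, -, rfl⟩; exact Metric.infDist_nonneg)

lemma greedyError_le {n : ℕ} {c : ℝ} (hne : K.Nonempty)
    (h : ∀ g ∈ K, Metric.infDist g (spanFirst f n : Set X) ≤ c) : greedyError K f n ≤ c :=
  csSup_le (hne.image _) (by rintro _ ⟨g, hg, rfl⟩; exact h g hg)

lemma greedyError_antitone (hK : IsCompact K) (hne : K.Nonempty) (f : ℕ → X) :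
    Antitone (greedyError K f) := fun _ _ hmn =>
  greedyError_le hne fun _ hg =>
    (Metric.infDist_le_infDist_of_subset (spanFirst_mono f hmn) ⟨0, Submodule.zero_mem _⟩).trans
      (hK.infDist_le_sSup _ hg)

lemma IsWeakGreedy.mul_greedyError_le (hf : IsWeakGreedy γ K f) (hγ : 0 < γ) (n : ℕ) :
    γ * greedyError K f n ≤ Metric.infDist (f n) (spanFirst f n : Set X) := by
  rw [← le_div_iff₀' hγ]
  exact greedyError_le ⟨f 0, (hf 0).1⟩ fun g hg => (le_div_iff₀' hγ).2 ((hf n).2 g hg)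

lemma exists_subspace_of_kolmogorovWidth_lt (hK : IsCompact K) {m : ℕ} {δ : ℝ}
    (h : kolmogorovWidth m K < δ) :
    ∃ Y : Submodule ℝ X, FiniteDimensional ℝ Y ∧ Module.finrank ℝ Y ≤ m ∧
      ∀ g ∈ K, ∃ y ∈ Y, ‖g - y‖ ≤ δ := by
  obtain ⟨_, ⟨Y, hfin, hrank, rfl⟩, hlt⟩ := exists_lt_of_csInf_lt
    (by exact ⟨_, ⊥, inferInstance, by simp, rfl⟩) h
  refine ⟨Y, hfin, hrank, fun g hg => ?_⟩
  obtain ⟨y, hy, hgy⟩ := (Metric.infDist_lt_iff ⟨0, Y.zero_mem⟩).1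
    ((hK.infDist_le_sSup Y hg).trans_lt hlt)
  exact ⟨y, hy, by rw [← dist_eq_norm]; exact hgy.le⟩

/-- The first greedy error is controlled by the one-dimensional width, irrespective of the
size of `K`. -/
lemma IsWeakGreedy.greedyError_one_le (hf : IsWeakGreedy γ K f) (hK : IsCompact K)
    (hγ : 0 < γ) {δ : ℝ} (hδ : kolmogorovWidth 1 K < δ) :
    greedyError K f 1 ≤ (2 + 2 / γ) * δ := by
  obtain ⟨Y, hfin, hrank, hY⟩ := exists_subspace_of_kolmogorovWidth_lt hK hδ
  obtain ⟨v, hv⟩ := finrank_le_one_iff.1 hrank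
  obtain ⟨y₀, hy₀, hfy₀⟩ := hY _ (hf 0).1
  have hδ₀ : 0 ≤ δ := (norm_nonneg _).trans hfy₀
  have hnorm : ∀ g ∈ K, γ * ‖g‖ ≤ ‖f 0‖ := fun g hg => by
    have := (hf 0).2 g hg
    simpa [spanFirst] using this
  refine greedyError_le ⟨f 0, (hf 0).1⟩ fun g hg => ?_
  have hgn : ‖g‖ ≤ ‖f 0‖ / γ := (le_div_iff₀' hγ).2 (hnorm g hg)
  rcases le_or_gt ‖f 0‖ (2 * δ) with hsmall | hlarge
  · calc Metric.infDist g (spanFirst f 1 : Set X) ≤ dist g 0 :=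
          Metric.infDist_le_dist_of_mem (Submodule.zero_mem _)
      _ ≤ 2 * δ / γ := by rw [dist_zero_right]; exact hgn.trans (by gcongr)
      _ = 2 / γ * δ := by ring
      _ ≤ _ := by gcongr; linarith
  · obtain ⟨y, hy, hgy⟩ := hY g hg
    have hy₀n : ‖f 0‖ / 2 ≤ ‖y₀‖ := by
      have := norm_sub_norm_le (f 0) y₀
      linarith
    have hy₀pos : 0 < ‖y₀‖ := by linarith
    obtain ⟨a, ha⟩ := hv ⟨y₀, hy₀⟩
    obtain ⟨b, hb⟩ := hv ⟨y, hy⟩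
    replace ha : a • (v : X) = y₀ := congrArg Subtype.val ha
    replace hb : b • (v : X) = y := congrArg Subtype.val hb
    have ha₀ : a ≠ 0 := by
      rintro rfl
      rw [← ha] at hy₀pos
      simp at hy₀pos
    obtain ⟨t, ht⟩ : ∃ t : ℝ, t • y₀ = y :=
      ⟨b / a, by rw [← ha, smul_smul, div_mul_cancel₀ _ ha₀, hb]⟩
    have htn : |t| ≤ 2 / γ + 1 := by
      have h1 : |t| * ‖y₀‖ = ‖y‖ := by rw [← ht, norm_smul, Real.norm_eq_abs]
      have h2 : ‖y‖ ≤ ‖g‖ + δ := by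
        have := norm_sub_norm_le y g
        rw [norm_sub_rev] at this
        linarith
      refine le_of_mul_le_mul_right (a := ‖y₀‖) ?_ hy₀pos
      calc |t| * ‖y₀‖ ≤ ‖f 0‖ / γ + ‖f 0‖ / 2 := by linarith
        _ = (2 / γ + 1) * (‖f 0‖ / 2) := by ring
        _ ≤ _ := by gcongr
    calc Metric.infDist g (spanFirst f 1 : Set X) ≤ dist g (t • f 0) :=
          Metric.infDist_le_dist_of_mem (Submodule.smul_mem _ _ (mem_spanFirst f one_pos))
      _ = ‖(g - y) + t • (y₀ - f 0)‖ := by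
          rw [dist_eq_norm, smul_sub, ht]; congr 1; abel
      _ ≤ ‖g - y‖ + |t| * ‖f 0 - y₀‖ := by
          rw [norm_sub_rev (f 0), ← Real.norm_eq_abs, ← norm_smul]; exact norm_add_le _ _
      _ ≤ δ + (2 / γ + 1) * δ := by gcongr
      _ = _ := by ring

end NormedSpace

variable [InnerProductSpace ℝ X] {K : Set X} {f : ℕ → X} {γ : ℝ}

lemma inner_sub_starProjection_spanFirst_eq_zero (f : ℕ → X) {i j : ℕ} (hij : i < j) :
    ⟪f i - (spanFirst f i).starProjection (f i), f j - (spanFirst f j).starProjection (f j)⟫ = 0 :=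
  Submodule.inner_right_of_mem_orthogonal
    (Submodule.sub_mem _ (mem_spanFirst f hij)
      (spanFirst_mono f hij.le (Submodule.starProjection_apply_mem _ _)))
    (Submodule.sub_starProjection_mem_orthogonal _)

/-- Comparison of greedy errors `k` steps apart in terms of the `m`-width. -/
lemma IsWeakGreedy.mul_greedyError_add_le (hf : IsWeakGreedy γ K f) (hK : IsCompact K)
    (hγ : 0 < γ) {m : ℕ} {δ : ℝ} (hδ : kolmogorovWidth m K < δ) (N k : ℕ) :
    k * (γ * greedyError K f (N + k)) ≤ greedyError K f N * √(k * m) + k * δ := by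
  obtain ⟨Y, hfin, hrank, hY⟩ := exists_subspace_of_kolmogorovWidth_lt hK hδ
  have hδ₀ : 0 ≤ δ := by
    obtain ⟨y, -, hy⟩ := hY _ (hf 0).1
    exact (norm_nonneg _).trans hy
  have hanti := greedyError_antitone hK ⟨f 0, (hf 0).1⟩ f
  have hN₀ := greedyError_nonneg K f N
  rcases (greedyError_nonneg K f (N + k)).eq_or_lt with hzero | hpos
  · rw [← hzero, mul_zero, mul_zero]; positivity
  let r : ℕ → X := fun n => f n - (spanFirst f n).starProjection (f n)
  have hr (i : Fin k) : γ * greedyError K f (N + k) ≤ ‖r (N + i)‖ := by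
    simp only [r]
    rw [norm_sub_starProjection_eq_infDist]
    refine le_trans ?_ (hf.mul_greedyError_le hγ (N + i))
    gcongr
    exact hanti (by omega)
  have hr₀ (i : Fin k) : 0 < ‖r (N + i)‖ := (mul_pos hγ hpos).trans_le (hr i)
  let e : Fin k → X := fun i => ‖r (N + i)‖⁻¹ • r (N + i)
  have he : Orthonormal ℝ e := by
    refine ⟨fun i => ?_, fun i j hij => ?_⟩
    · simp only [e]
      rw [norm_smul, norm_inv, norm_norm, inv_mul_cancel₀ (hr₀ i).ne']
    · have : ⟪r (N + i), r (N + j)⟫ = 0 := by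
        rcases lt_or_gt_of_ne hij with h | h
        · exact inner_sub_starProjection_spanFirst_eq_zero f (by omega)
        · rw [real_inner_comm]
          exact inner_sub_starProjection_spanFirst_eq_zero f (by omega)
      simp [e, inner_smul_left, inner_smul_right, this]
  let P : X →ₗ[ℝ] X := ((spanFirst f N)ᗮ.starProjection : X →L[ℝ] X)
  let h : Fin k → X := fun i => P (f (N + i))
  have hP (x : X) : P x = x - (spanFirst f N).starProjection x :=
    Submodule.starProjection_orthogonal_val x
  have hinner (i : Fin k) : ⟪h i, e i⟫ = ‖r (N + i)‖ := by
    have horth (w : X) (hw : w ∈ spanFirst f (N + i)) : ⟪w, r (N + i)⟫ = 0 :=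
      Submodule.inner_right_of_mem_orthogonal hw (Submodule.sub_starProjection_mem_orthogonal _)
    have h1 : ⟪h i, r (N + i)⟫ = ‖r (N + i)‖ ^ 2 := by
      have hdecomp : h i = r (N + i) + ((spanFirst f (N + i)).starProjection (f (N + i)) -
          (spanFirst f N).starProjection (f (N + i))) := by
        simp only [h, hP, r]; abel
      rw [hdecomp, inner_add_left, real_inner_self_eq_norm_sq, horth, add_zero]
      exact Submodule.sub_mem _ (Submodule.starProjection_apply_mem _ _)
        (spanFirst_mono f (Nat.le_add_right N i) (Submodule.starProjection_apply_mem _ _))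
    simp only [e]
    rw [inner_smul_right, h1, sq, inv_mul_cancel_left₀ (hr₀ i).ne']
  have hhn (i : Fin k) : ‖h i‖ ≤ greedyError K f N := by
    simp only [h, hP]
    rw [norm_sub_starProjection_eq_infDist]
    exact hK.infDist_le_sSup _ (hf _).1
  have hhδ (i : Fin k) : ∃ w ∈ Y.map P, ‖h i - w‖ ≤ δ := by
    obtain ⟨y, hy, hfy⟩ := hY _ (hf (N + i)).1
    refine ⟨P y, Submodule.mem_map_of_mem hy, ?_⟩
    simp only [h]
    rw [← map_sub]
    exact (Submodule.norm_starProjection_apply_le _ _).trans hfy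
  have hsum := he.sum_inner_le (Y.map P) hN₀ hhn hhδ
  rw [Fintype.card_fin] at hsum
  calc k * (γ * greedyError K f (N + k)) = ∑ _i : Fin k, γ * greedyError K f (N + k) := by simp
    _ ≤ ∑ i, ⟪h i, e i⟫ := Finset.sum_le_sum fun i _ => by rw [hinner]; exact hr i
    _ ≤ _ := hsum
    _ ≤ _ := by
      gcongr
      exact (Submodule.finrank_map_le P Y).trans hrank

/-- Comparison of greedy errors `L * m` steps apart. -/
lemma IsWeakGreedy.greedyError_add_mul_le (hf : IsWeakGreedy γ K f) (hK : IsCompact K)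
    (hγ : 0 < γ) {m L : ℕ} (hm : 0 < m) (hL : 0 < L) {δ : ℝ} (hδ : kolmogorovWidth m K < δ)
    (N : ℕ) :
    greedyError K f (N + L * m) ≤ (greedyError K f N / √L + δ) / γ := by
  have h := hf.mul_greedyError_add_le hK hγ hδ N (L * m)
  have hL' : (0 : ℝ) < L := by exact_mod_cast hL
  have hm' : (0 : ℝ) < m := by exact_mod_cast hm
  have hsqrt : √(((L * m : ℕ) : ℝ) * m) = L * m / √L := by
    rw [Nat.cast_mul, mul_assoc, Real.sqrt_mul hL'.le, Real.sqrt_mul_self hm'.le,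
      eq_div_iff (Real.sqrt_pos.2 hL').ne', mul_right_comm, Real.mul_self_sqrt hL'.le]
  rw [hsqrt] at h
  rw [le_div_iff₀' hγ]
  refine le_of_mul_le_mul_left (a := (L : ℝ) * m) ?_ (mul_pos hL' hm')
  push_cast at h
  calc _ ≤ _ := h
    _ = _ := by ring

/-- In a Hilbert space the weak greedy algorithm attains the polynomial rate of the Kolmogorov
widths. -/
lemma IsWeakGreedy.greedyError_le_rpow (hf : IsWeakGreedy γ K f) (hK : IsCompact K)
    (hγ : 0 < γ) {s M : ℝ} (hs : 0 < s) (hM : 0 < M)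
    (hwidth : ∀ n : ℕ, 1 ≤ n → kolmogorovWidth n K ≤ M * (n : ℝ) ^ (-s))
    {L : ℕ} (hL : 0 < L) (hLγ : 2 * 2 ^ s ≤ γ * √L) {n : ℕ} (hn : 1 ≤ n) :
    greedyError K f n ≤
      ((2 + 2 / γ) * (2 * M) * (2 * L) ^ s + 4 * M / γ * (4 * L) ^ s) * (n : ℝ) ^ (-s) := by
  set C := (2 + 2 / γ) * (2 * M) * (2 * L) ^ s + 4 * M / γ * (4 * L) ^ s
  have hL' : (0 : ℝ) < L := by exact_mod_cast hL
  have hC₀ : 0 < C := by positivity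
  have hδ (m : ℕ) (hm : 1 ≤ m) : kolmogorovWidth m K < 2 * M * (m : ℝ) ^ (-s) := by
    have hm' : (0 : ℝ) < m := by exact_mod_cast hm
    have hpos : 0 < M * (m : ℝ) ^ (-s) := by positivity
    linarith [hwidth m hm]
  have scale {x y c : ℝ} (hx : 0 < x) (hy : 0 < y) (hc : 0 < c) (h : y ≤ c * x) :
      x ^ (-s) ≤ c ^ s * y ^ (-s) := by
    calc x ^ (-s) = c ^ s * (c * x) ^ (-s) := by
          rw [Real.mul_rpow hc.le hx.le, ← mul_assoc, ← Real.rpow_add hc, add_neg_cancel,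
            Real.rpow_zero, one_mul]
      _ ≤ _ := mul_le_mul_of_nonneg_left
          (Real.rpow_le_rpow_of_nonpos hy h (neg_nonpos.2 hs.le)) (by positivity)
  induction n using Nat.strong_induction_on with
  | _ n ih =>
  have hn' : (0 : ℝ) < n := by exact_mod_cast hn
  rcases lt_or_ge n (2 * L) with hsmall | hlarge
  · have h1 := hf.greedyError_one_le hK hγ (hδ 1 le_rfl)
    rw [Nat.cast_one, Real.one_rpow, mul_one] at h1
    have h2 : 1 ≤ (2 * L : ℝ) ^ s * (n : ℝ) ^ (-s) := by
      have := scale one_pos hn' (c := 2 * L) (by positivity)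
        (by rw [mul_one]; exact_mod_cast hsmall.le)
      rwa [Real.one_rpow] at this
    calc greedyError K f n ≤ greedyError K f 1 := greedyError_antitone hK ⟨f 0, (hf 0).1⟩ f hn
      _ ≤ (2 + 2 / γ) * (2 * M) * ((2 * L) ^ s * (n : ℝ) ^ (-s)) :=
          h1.trans (le_mul_of_one_le_right (by positivity) h2)
      _ = (2 + 2 / γ) * (2 * M) * (2 * L) ^ s * (n : ℝ) ^ (-s) := by ring
      _ ≤ C * (n : ℝ) ^ (-s) := by
          gcongr
          exact le_add_of_nonneg_right (by positivity)
  · obtain ⟨m, hmn, hnm⟩ : ∃ m, 2 * L * m ≤ n ∧ n < 2 * L * (m + 1) :=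
      ⟨n / (2 * L), Nat.mul_div_le _ _, Nat.lt_mul_div_succ _ (by omega)⟩
    have hm : 1 ≤ m := by
      by_contra! h
      obtain rfl : m = 0 := by omega
      omega
    have hLm : 0 < L * m := Nat.mul_pos hL hm
    obtain ⟨N, rfl⟩ : ∃ N, n = N + L * m := ⟨n - L * m, by rw [mul_assoc] at hmn; omega⟩
    have hN : L * m ≤ N := by rw [mul_assoc] at hmn; omega
    have hN₀ : 1 ≤ N := by omega
    have hm' : (0 : ℝ) < m := by exact_mod_cast hm
    have hN' : (0 : ℝ) < N := by exact_mod_cast hN₀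
    have hNs := scale hN' hn' two_pos (by exact_mod_cast (by omega : N + L * m ≤ 2 * N))
    have hms := scale hm' hn' (c := 4 * L) (by positivity)
      (by exact_mod_cast hnm.le.trans (by nlinarith))
    set q := ((N + L * m : ℕ) : ℝ) ^ (-s)
    have hq₀ : 0 < q := by positivity
    have hsqrt : 0 < √(L : ℝ) := Real.sqrt_pos.2 hL'
    have hhalf : C * (2 ^ s * q) / √L / γ ≤ C / 2 * q := by
      rw [div_div, div_le_iff₀ (by positivity)]
      calc C * (2 ^ s * q) = C / 2 * q * (2 * 2 ^ s) := by ring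
        _ ≤ C / 2 * q * (√L * γ) := by rw [mul_comm (√(L : ℝ))]; gcongr
    calc greedyError K f (N + L * m)
        ≤ (greedyError K f N / √L + 2 * M * (m : ℝ) ^ (-s)) / γ :=
          hf.greedyError_add_mul_le hK hγ hm hL (hδ m hm) N
      _ ≤ (C * (2 ^ s * q) / √L + 2 * M * ((4 * L) ^ s * q)) / γ := by
          have := (ih N (by omega) hN₀).trans (mul_le_mul_of_nonneg_left hNs hC₀.le)
          gcongr
      _ = C * (2 ^ s * q) / √L / γ + 4 * M / γ * (4 * L) ^ s / 2 * q := by ring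
      _ ≤ C / 2 * q + C / 2 * q := by
          gcongr
          exact le_add_of_nonneg_left (by positivity)
      _ = C * q := by ring

end Greedy

/-- if `d_n(K) ≤ M n^{-s}` with `s > 1/2`, then the weak greedy algorithm
converges with rate `n^{1/2 - s}`, with a constant depending only on `s, M, γ`. -/
theorem weakGreedy_rate_of_width_decay (s M γ : ℝ) (hs : 1 / 2 < s) (hM : 0 < M)
    (hγ : γ ∈ Set.Ioc (0 : ℝ) 1) :
    ∃ C : ℝ, 0 < C ∧
      ∀ (X : Type) (_ : NormedAddCommGroup X) (_ : InnerProductSpace ℝ X) (_ : CompleteSpace X)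
        (K : Set X), IsCompact K →
        (∀ n : ℕ, 1 ≤ n → kolmogorovWidth n K ≤ M * (n : ℝ) ^ (-s)) →
        ∀ f : ℕ → X, IsWeakGreedy γ K f →
        ∀ n : ℕ, 1 ≤ n →
          greedyError K f n ≤ C * (n : ℝ) ^ (1 / 2 - s) := by
  have hγ₀ := hγ.1
  obtain ⟨L, hL⟩ := exists_nat_gt ((2 * 2 ^ s / γ) ^ 2)
  have hL' : (0 : ℝ) < L := (sq_nonneg _).trans_lt hL
  have hLγ : 2 * 2 ^ s ≤ γ * √L := (div_le_iff₀' hγ₀).1 (Real.le_sqrt_of_sq_le hL.le)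
  refine ⟨(2 + 2 / γ) * (2 * M) * (2 * L) ^ s + 4 * M / γ * (4 * L) ^ s, by positivity, ?_⟩
  intro X _ _ _ K hK hwidth f hf n hn
  refine (hf.greedyError_le_rpow hK hγ₀ (by linarith) hM hwidth (Nat.cast_pos.1 hL') hLγ hn).trans
    (mul_le_mul_of_nonneg_left ?_ (by positivity))
  exact Real.rpow_le_rpow_of_exponent_le (by exact_mod_cast hn) (by linarith)
end

section
/- Let K be a compact subset of a real Banach space X, let v_1, …, v_n ∈ K be linearly independent, set X_0 = {0} and X_k = span{v_1,…,v_k}, and let T : X_n → ℓ_2^n be any linear isomorphism. Then (∏_{k=1}^n dist(v_k, X_{k−1}))^{1/n} ≤ ‖T‖·‖T^{−1}‖ · (n! V_n)^{1/n} · ε_n(co(K)). -/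
open scoped RealInnerProductSpace

open MeasureTheory Function

section Isodiametric

/-- The Steiner symmetrization of a set in `ℝ^ι` in the direction of the `i`-th coordinate. -/
def steinerSymm {ι : Type*} [DecidableEq ι] (i : ι) (A : Set (ι → ℝ)) : Set (ι → ℝ) :=
  {p | ENNReal.ofReal (2 * |p i|) < volume {t : ℝ | update p i t ∈ A}}

lemma volume_setOf_two_mul_abs_lt (v : ENNReal) :
    volume {t : ℝ | ENNReal.ofReal (2 * |t|) < v} = v := by
  rcases eq_or_ne v ⊤ with rfl | hv
  · simp [-ENNReal.ofReal_mul, ENNReal.ofReal_lt_top]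
  · lift v to NNReal using hv
    have : {t : ℝ | ENNReal.ofReal (2 * |t|) < v} = Metric.ball 0 ((v : ℝ) / 2) := by
      ext t
      rw [Set.mem_ofPred_eq, mem_ball_zero_iff, Real.norm_eq_abs,
        ENNReal.ofReal_lt_coe_iff (by positivity), lt_div_iff₀ two_pos, mul_comm]
    rw [this, Real.volume_ball, mul_div_cancel₀ _ two_ne_zero, ENNReal.ofReal_coe_nnreal]

lemma volume_add_volume_le_of_abs_sub_le {S T : Set ℝ} {D : ℝ} (hS : S.Nonempty)
    (hT : T.Nonempty) (h : ∀ s ∈ S, ∀ t ∈ T, |s - t| ≤ D) :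
    volume S + volume T ≤ ENNReal.ofReal (2 * D) := by
  obtain ⟨s₀, hs₀⟩ := hS
  obtain ⟨t₀, ht₀⟩ := hT
  have hSa : BddAbove S := ⟨t₀ + D, fun s hs => by linarith [le_of_abs_le (h s hs t₀ ht₀)]⟩
  have hSb : BddBelow S := ⟨t₀ - D, fun s hs => by linarith [neg_le_of_abs_le (h s hs t₀ ht₀)]⟩
  have hTa : BddAbove T := ⟨s₀ + D, fun t ht => by linarith [neg_le_of_abs_le (h s₀ hs₀ t ht)]⟩
  have hTb : BddBelow T := ⟨s₀ - D, fun t ht => by linarith [le_of_abs_le (h s₀ hs₀ t ht)]⟩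
  have hST : sSup S ≤ sInf T + D := csSup_le ⟨s₀, hs₀⟩ fun s hs => by
    rw [← sub_le_iff_le_add]
    exact le_csInf ⟨t₀, ht₀⟩ fun t ht => by linarith [le_of_abs_le (h s hs t ht)]
  have hTS : sSup T ≤ sInf S + D := csSup_le ⟨t₀, ht₀⟩ fun t ht => by
    rw [← sub_le_iff_le_add]
    exact le_csInf ⟨s₀, hs₀⟩ fun s hs => by linarith [neg_le_of_abs_le (h s hs t ht)]
  have hS' : sInf S ≤ sSup S := (csInf_le hSb hs₀).trans (le_csSup hSa hs₀)
  have hT' : sInf T ≤ sSup T := (csInf_le hTb ht₀).trans (le_csSup hTa ht₀)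
  calc volume S + volume T
      ≤ ENNReal.ofReal (sSup S - sInf S) + ENNReal.ofReal (sSup T - sInf T) := by
        rw [← Real.volume_Icc, ← Real.volume_Icc]
        exact add_le_add (measure_mono (subset_Icc_csInf_csSup hSb hSa))
          (measure_mono (subset_Icc_csInf_csSup hTb hTa))
    _ ≤ ENNReal.ofReal (2 * D) := by
        rw [← ENNReal.ofReal_add (by linarith) (by linarith)]
        exact ENNReal.ofReal_le_ofReal (by linarith)


variable {ι : Type*} [DecidableEq ι]

lemma update_neg_mem_steinerSymm (i : ι) {A : Set (ι → ℝ)} :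
    ∀ p ∈ steinerSymm i A, update p i (-p i) ∈ steinerSymm i A := by
  intro p hp
  simpa [steinerSymm] using hp

lemma update_neg_mem_steinerSymm_of_ne {i j : ι} (hij : j ≠ i) {A : Set (ι → ℝ)}
    (hA : ∀ p ∈ A, update p j (-p j) ∈ A) :
    ∀ p ∈ steinerSymm i A, update p j (-p j) ∈ steinerSymm i A := by
  intro p hp
  simp only [steinerSymm, Set.mem_ofPred_eq, update_of_ne hij.symm] at hp ⊢
  refine hp.trans_le (measure_mono fun t ht => ?_)
  have h := hA _ ht
  rwa [update_of_ne hij, update_comm hij.symm] at h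

lemma lmarginal_singleton_indicator_one (i : ι) {A : Set (ι → ℝ)} (hA : MeasurableSet A)
    (p : ι → ℝ) :
    lmarginal (fun _ => volume) {i} (A.indicator 1) p = volume {t : ℝ | update p i t ∈ A} := by
  rw [lmarginal_singleton]
  exact lintegral_indicator_one (measurable_update p hA)

lemma measurableSet_steinerSymm (i : ι) {A : Set (ι → ℝ)} (hA : MeasurableSet A) :
    MeasurableSet (steinerSymm i A) := by
  refine measurableSet_lt (by fun_prop) ?_
  simp_rw [← lmarginal_singleton_indicator_one i hA]
  exact (measurable_one.indicator hA).lmarginal _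

variable [Fintype ι]

lemma volume_steinerSymm (i : ι) {A : Set (ι → ℝ)} (hA : MeasurableSet A) :
    volume (steinerSymm i A) = volume A := by
  have hB := measurableSet_steinerSymm i hA
  rw [← lintegral_indicator_one hA, ← lintegral_indicator_one hB]
  refine lintegral_eq_of_lmarginal_eq {i} (measurable_one.indicator hB)
    (measurable_one.indicator hA) (funext fun p => ?_)
  rw [lmarginal_singleton_indicator_one i hA, lmarginal_singleton_indicator_one i hB]
  simp only [steinerSymm, Set.mem_ofPred_eq, update_self, update_idem,
    volume_setOf_two_mul_abs_lt]

lemma sum_sq_sub_steinerSymm_le (i : ι) {A : Set (ι → ℝ)} {C : ℝ}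
    (hA : ∀ p ∈ A, ∀ q ∈ A, ∑ k, (p k - q k) ^ 2 ≤ C) :
    ∀ p ∈ steinerSymm i A, ∀ q ∈ steinerSymm i A, ∑ k, (p k - q k) ^ 2 ≤ C := by
  intro p hp q hq
  set P := {t : ℝ | update p i t ∈ A}
  set Q := {t : ℝ | update q i t ∈ A}
  have hPne : P.Nonempty := nonempty_of_measure_ne_zero (zero_le.trans_lt hp).ne'
  have hQne : Q.Nonempty := nonempty_of_measure_ne_zero (zero_le.trans_lt hq).ne'
  set E := ∑ k ∈ Finset.univ.erase i, (p k - q k) ^ 2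
  have hsplit : ∀ s ∈ P, ∀ t ∈ Q, (s - t) ^ 2 + E ≤ C := by
    intro s hs t ht
    have h := hA _ hs _ ht
    rw [← Finset.add_sum_erase _ _ (Finset.mem_univ i)] at h
    simp only [update_self] at h
    convert! h using 2
    exact Finset.sum_congr rfl fun k hk => by simp [Finset.ne_of_mem_erase hk]
  have hD : ∀ s ∈ P, ∀ t ∈ Q, |s - t| ≤ √(C - E) := fun s hs t ht =>
    Real.abs_le_sqrt (by linarith [hsplit s hs t ht])
  have hCE : 0 ≤ C - E := by
    obtain ⟨s, hs⟩ := hPne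
    obtain ⟨t, ht⟩ := hQne
    nlinarith [hsplit s hs t ht]
  have hlt : ENNReal.ofReal (2 * |p i|) + ENNReal.ofReal (2 * |q i|) <
      ENNReal.ofReal (2 * √(C - E)) :=
    (ENNReal.add_lt_add hp hq).trans_le (volume_add_volume_le_of_abs_sub_le hPne hQne hD)
  rw [← ENNReal.ofReal_add (by positivity) (by positivity)] at hlt
  have hlt' := (ENNReal.ofReal_lt_ofReal_iff_of_nonneg (by positivity)).1 hlt
  have habs : |p i - q i| ≤ √(C - E) := by linarith [abs_sub (p i) (q i)]
  have hsq : (p i - q i) ^ 2 ≤ C - E := by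
    rw [← sq_abs, ← Real.sq_sqrt hCE]
    gcongr
  rw [← Finset.add_sum_erase _ _ (Finset.mem_univ i)]
  linarith

lemma exists_measurableSet_forall_update_neg_mem {A : Set (ι → ℝ)} (hA : MeasurableSet A) {C : ℝ}
    (hC : ∀ p ∈ A, ∀ q ∈ A, ∑ k, (p k - q k) ^ 2 ≤ C) (s : Finset ι) :
    ∃ B : Set (ι → ℝ), MeasurableSet B ∧ volume B = volume A ∧
      (∀ p ∈ B, ∀ q ∈ B, ∑ k, (p k - q k) ^ 2 ≤ C) ∧
      ∀ j ∈ s, ∀ p ∈ B, update p j (-p j) ∈ B := by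
  induction s using Finset.induction_on with
  | empty => exact ⟨A, hA, rfl, hC, by simp⟩
  | insert i s his ih =>
    obtain ⟨B, hB, hBA, hBC, hBs⟩ := ih
    refine ⟨steinerSymm i B, measurableSet_steinerSymm i hB, (volume_steinerSymm i hB).trans hBA,
      sum_sq_sub_steinerSymm_le i hBC, fun j hj => ?_⟩
    rcases Finset.mem_insert.1 hj with rfl | hj
    · exact update_neg_mem_steinerSymm j
    · exact update_neg_mem_steinerSymm_of_ne (ne_of_mem_of_not_mem hj his) (hBs j hj)

/-- **Isodiametric inequality**: among the sets of given Euclidean diameter, the ball has the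
largest volume. -/
theorem volume_le_of_sum_sq_sub_le [Nonempty ι] {A : Set (ι → ℝ)} (hA : MeasurableSet A) {R : ℝ}
    (hR : 0 ≤ R) (h : ∀ p ∈ A, ∀ q ∈ A, ∑ k, (p k - q k) ^ 2 ≤ (2 * R) ^ 2) :
    volume A ≤ ENNReal.ofReal (R ^ Fintype.card ι * unitBallVol (Fintype.card ι)) := by
  obtain ⟨B, -, hBA, hBC, hBs⟩ := exists_measurableSet_forall_update_neg_mem hA h Finset.univ
  have hneg : ∀ p ∈ B, -p ∈ B := by
    intro p hp
    have key : ∀ s : Finset ι, s.piecewise (-p) p ∈ B := by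
      intro s
      induction s using Finset.induction_on with
      | empty => simpa using hp
      | insert j s hj ih =>
        rw [Finset.piecewise_insert]
        simpa [hj] using hBs j (Finset.mem_univ j) _ ih
    simpa using key Finset.univ
  have hsub : B ⊆ WithLp.toLp 2 ⁻¹' Metric.closedBall (0 : EuclideanSpace ℝ ι) R := by
    intro p hp
    rw [Set.mem_preimage, mem_closedBall_zero_iff, EuclideanSpace.norm_eq]
    refine Real.sqrt_le_iff.2 ⟨hR, ?_⟩
    have h4 := hBC p hp _ (hneg p hp)
    have : ∑ k, (p k - (-p) k) ^ 2 = 4 * ∑ k, ‖p k‖ ^ 2 := by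
      rw [Finset.mul_sum]
      exact Finset.sum_congr rfl fun k _ => by
        rw [Pi.neg_apply, Real.norm_eq_abs, sq_abs]; ring
    change ∑ k, ‖p k‖ ^ 2 ≤ R ^ 2
    linarith
  rw [← hBA]
  refine (measure_mono hsub).trans_eq ?_
  rw [(PiLp.volume_preserving_toLp ι).measure_preimage
    measurableSet_closedBall.nullMeasurableSet, EuclideanSpace.volume_closedBall,
    ← ENNReal.ofReal_pow hR, ← ENNReal.ofReal_mul (by positivity), unitBallVol,
    Real.sqrt_eq_rpow, ← Real.rpow_natCast, ← Real.rpow_natCast, ← Real.rpow_mul Real.pi_nonneg]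
  ring_nf

end Isodiametric

section GramSchmidt

open InnerProductSpace

variable {F : Type*} [NormedAddCommGroup F] [InnerProductSpace ℝ F] {n : ℕ}

lemma sub_gramSchmidt_mem_span (w : Fin n → F) (k : Fin n) :
    w k - gramSchmidt ℝ w k ∈ Submodule.span ℝ (w '' Set.Iio k) := by
  rw [gramSchmidt_def, sub_sub_cancel, ← span_gramSchmidt_Iio]
  refine Submodule.sum_mem _ fun i hi => ?_
  rw [Submodule.starProjection_singleton]
  exact Submodule.smul_mem _ _ (Submodule.subset_span ⟨i, Finset.mem_Iio.1 hi, rfl⟩)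

lemma infDist_span_le_opNorm_mul_norm_gramSchmidt {X : Type*} [NormedAddCommGroup X]
    [NormedSpace ℝ X] (S : F →L[ℝ] X) (w : Fin n → F) (k : Fin n) :
    Metric.infDist (S (w k)) (Submodule.span ℝ ((fun j => S (w j)) '' Set.Iio k) : Set X) ≤
      ‖S‖ * ‖gramSchmidt ℝ w k‖ := by
  have hmem : S (w k - gramSchmidt ℝ w k) ∈
      Submodule.span ℝ ((fun j => S (w j)) '' Set.Iio k) := by
    have h := Submodule.mem_map_of_mem (f := (S : F →ₗ[ℝ] X)) (sub_gramSchmidt_mem_span w k)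
    rwa [Submodule.map_span, Set.image_image] at h
  refine (Metric.infDist_le_dist_of_mem hmem).trans ?_
  rw [dist_eq_norm, ← map_sub, sub_sub_cancel]
  exact S.le_opNorm _

lemma inner_gramSchmidt_self (w : Fin n → F) (k : Fin n) :
    ⟪gramSchmidt ℝ w k, w k⟫ = ‖gramSchmidt ℝ w k‖ ^ 2 := by
  conv_lhs => rw [gramSchmidt_def'' ℝ w k]
  rw [inner_add_right, real_inner_self_eq_norm_sq, inner_sum, Finset.sum_eq_zero, add_zero]
  intro i hi
  rw [inner_smul_right, gramSchmidt_orthogonal ℝ w (Finset.mem_Iio.1 hi).ne', mul_zero]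

lemma inner_gramSchmidtOrthonormalBasis_self [FiniteDimensional ℝ F]
    (h : Module.finrank ℝ F = Fintype.card (Fin n)) (w : Fin n → F) (k : Fin n) :
    ⟪gramSchmidtOrthonormalBasis h w k, w k⟫ = ‖gramSchmidt ℝ w k‖ := by
  by_cases hk : gramSchmidt ℝ w k = 0
  · rw [inner_gramSchmidtOrthonormalBasis_eq_zero h (by simp [gramSchmidtNormed, hk]), hk,
      norm_zero]
  · have hk' : ‖gramSchmidt ℝ w k‖ ≠ 0 := norm_ne_zero_iff.2 hk
    rw [gramSchmidtOrthonormalBasis_apply h (by simp [gramSchmidtNormed, hk]), gramSchmidtNormed,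
      inner_smul_left, inner_gramSchmidt_self]
    simp only [RCLike.ofReal_real_eq_id, id, map_inv₀, conj_trivial]
    field_simp

lemma det_toMatrix_gramSchmidtOrthonormalBasis [FiniteDimensional ℝ F]
    (h : Module.finrank ℝ F = Fintype.card (Fin n)) (w : Fin n → F) :
    ((gramSchmidtOrthonormalBasis h w).toBasis.toMatrix w).det =
      ∏ k, ‖gramSchmidt ℝ w k‖ := by
  rw [← Module.Basis.det_apply, gramSchmidtOrthonormalBasis_det]
  exact Finset.prod_congr rfl fun k _ => inner_gramSchmidtOrthonormalBasis_self h w k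

end GramSchmidt

section Covering

open InnerProductSpace

lemma volume_setOf_sum_abs_le_one {n : ℕ} (hn : 1 ≤ n) :
    volume {c : Fin n → ℝ | ∑ i, |c i| ≤ 1} = ENNReal.ofReal (2 ^ n / n.factorial) := by
  have : Nonempty (Fin n) := ⟨⟨0, hn⟩⟩
  have h := volume_sum_rpow_le (Fin n) (p := 1) le_rfl 1
  simpa [Real.Gamma_nat_eq_factorial, one_add_one_eq_two, Real.Gamma_two] using h

lemma unitBallVol_nonneg (n : ℕ) : 0 ≤ unitBallVol n := by
  unfold unitBallVol
  positivity

/-- Volume comparison: if the absolutely convex hull of `v` is covered by `2 ^ n` balls of radius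
`ε`, then the volume spanned by an `M`-Lipschitz linear image `w` of `v` is controlled by `ε`. -/
lemma prod_norm_gramSchmidt_le {X : Type*} [NormedAddCommGroup X] [NormedSpace ℝ X] {n : ℕ}
    (hn : 1 ≤ n) (v : Fin n → X) (w : Fin n → EuclideanSpace ℝ (Fin n)) {M ε : ℝ} (hM : 0 ≤ M)
    (hε : 0 ≤ ε) (hvw : ∀ c : Fin n → ℝ, ‖∑ k, c k • w k‖ ≤ M * ‖∑ k, c k • v k‖)
    (x : Fin (2 ^ n) → X)
    (hx : ∀ c : Fin n → ℝ, ∑ k, |c k| ≤ 1 → ∃ j, ‖∑ k, c k • v k - x j‖ ≤ ε) :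
    ∏ k, ‖gramSchmidt ℝ w k‖ ≤ n.factorial * unitBallVol n * (M * ε) ^ n := by
  have : Nonempty (Fin n) := ⟨⟨0, hn⟩⟩
  have hrank : Module.finrank ℝ (EuclideanSpace ℝ (Fin n)) = Fintype.card (Fin n) := by simp
  set b := gramSchmidtOrthonormalBasis hrank w with hb
  set Φ := Matrix.toLin' (b.toBasis.toMatrix w) with hΦ
  set P := ∏ k, ‖gramSchmidt ℝ w k‖
  have hP0 : 0 ≤ P := Finset.prod_nonneg fun _ _ => norm_nonneg _
  have hdet : LinearMap.det Φ = P := by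
    rw [hΦ, LinearMap.det_toLin', hb, det_toMatrix_gramSchmidtOrthonormalBasis]
  have hΦc : ∀ (c : Fin n → ℝ) (i : Fin n), Φ c i = b.repr (∑ k, c k • w k) i := by
    intro c i
    simp [hΦ, Matrix.mulVec, dotProduct, Module.Basis.toMatrix_apply, mul_comm]
  have hΦsq : ∀ c : Fin n → ℝ, ∑ i, Φ c i ^ 2 = ‖∑ k, c k • w k‖ ^ 2 := by
    intro c
    rw [← b.repr.norm_map, EuclideanSpace.norm_sq_eq]
    exact Finset.sum_congr rfl fun i _ => by rw [hΦc, Real.norm_eq_abs, sq_abs]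
  set O := {c : Fin n → ℝ | ∑ i, |c i| ≤ 1} with hO
  set A : Fin (2 ^ n) → Set (Fin n → ℝ) := fun j => {c | ‖∑ k, c k • v k - x j‖ ≤ ε}
  have hclosed : ∀ j, IsClosed (O ∩ A j) := fun j =>
    (isClosed_le (by fun_prop) continuous_const).inter
      (isClosed_le (by fun_prop) continuous_const)
  have hObdd : Bornology.IsBounded O := by
    refine (Metric.isBounded_closedBall (x := (0 : Fin n → ℝ)) (r := 1)).subset fun c hc => ?_
    rw [mem_closedBall_zero_iff, pi_norm_le_iff_of_nonneg zero_le_one]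
    exact fun i => (Finset.single_le_sum (f := fun i => |c i|) (fun _ _ => abs_nonneg _)
      (Finset.mem_univ i)).trans hc
  have hcompact : ∀ j, IsCompact (O ∩ A j) := fun j =>
    Metric.isCompact_of_isClosed_isBounded (hclosed j) (hObdd.subset Set.inter_subset_left)
  have hpiece : ∀ j, volume (Φ '' (O ∩ A j)) ≤ ENNReal.ofReal ((M * ε) ^ n * unitBallVol n) := by
    intro j
    have hmeas : MeasurableSet (Φ '' (O ∩ A j)) :=
      ((hcompact j).image Φ.continuous_of_finiteDimensional).measurableSet
    have h := volume_le_of_sum_sq_sub_le hmeas (R := M * ε) (by positivity) ?_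
    · simpa using h
    rintro _ ⟨c, ⟨-, hc⟩, rfl⟩ _ ⟨d, ⟨-, hd⟩, rfl⟩
    have hcd : ‖∑ k, (c - d) k • v k‖ ≤ 2 * ε := by
      have : ∑ k, (c - d) k • v k =
          (∑ k, c k • v k - x j) - (∑ k, d k • v k - x j) := by
        simp [sub_smul, Finset.sum_sub_distrib]
      rw [this]
      have h₁ : ‖∑ k, c k • v k - x j‖ ≤ ε := hc
      have h₂ : ‖∑ k, d k • v k - x j‖ ≤ ε := hd
      linarith [norm_sub_le (∑ k, c k • v k - x j) (∑ k, d k • v k - x j)]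
    calc ∑ k, (Φ c k - Φ d k) ^ 2 = ‖∑ k, (c - d) k • w k‖ ^ 2 := by
          rw [← hΦsq, map_sub]; rfl
      _ ≤ (2 * (M * ε)) ^ 2 := by
          refine pow_le_pow_left₀ (norm_nonneg _) ((hvw _).trans ?_) 2
          nlinarith
  have hcover : O ⊆ ⋃ j, O ∩ A j := fun c hc => by
    obtain ⟨j, hj⟩ := hx c hc
    exact Set.mem_iUnion.2 ⟨j, hc, hj⟩
  have hvol : volume (Φ '' O) ≤ ENNReal.ofReal (2 ^ n * ((M * ε) ^ n * unitBallVol n)) := by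
    calc volume (Φ '' O) ≤ volume (⋃ j, Φ '' (O ∩ A j)) := by
          rw [← Set.image_iUnion]
          exact measure_mono (Set.image_mono hcover)
      _ ≤ ∑ j, volume (Φ '' (O ∩ A j)) := measure_iUnion_fintype_le _ _
      _ ≤ ∑ _j : Fin (2 ^ n), ENNReal.ofReal ((M * ε) ^ n * unitBallVol n) :=
          Finset.sum_le_sum fun j _ => hpiece j
      _ = _ := by
          rw [Finset.sum_const, Finset.card_univ, Fintype.card_fin, nsmul_eq_mul,
            ENNReal.ofReal_mul (p := (2 : ℝ) ^ n) (by positivity)]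
          norm_num
  rw [Measure.addHaar_image_linearMap, hdet, abs_of_nonneg hP0, hO, volume_setOf_sum_abs_le_one hn,
    ← ENNReal.ofReal_mul hP0, ENNReal.ofReal_le_ofReal_iff
      (by have := unitBallVol_nonneg n; positivity)] at hvol
  have hfac : (0 : ℝ) < n.factorial := by positivity
  rw [mul_div_assoc', div_le_iff₀ hfac] at hvol
  have h2 : (0 : ℝ) < 2 ^ n := by positivity
  refine le_of_mul_le_mul_right ?_ h2
  linarith

end Covering

lemma exists_forall_norm_le_symConvexHull {X : Type*} [NormedAddCommGroup X] [NormedSpace ℝ X]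
    {K : Set X} (hK : Bornology.IsBounded K) :
    ∃ R : ℝ, 0 < R ∧ ∀ x ∈ symConvexHull K, ‖x‖ ≤ R := by
  obtain ⟨R, hR, hKR⟩ := hK.exists_pos_norm_le
  refine ⟨R, hR, fun x hx => ?_⟩
  have hsub : symConvexHull K ⊆ Metric.closedBall 0 R := by
    refine closure_minimal ?_ Metric.isClosed_closedBall
    rintro _ ⟨m, c, g, hg, hc, rfl⟩
    rw [mem_closedBall_zero_iff]
    calc ‖∑ i, c i • g i‖ ≤ ∑ i, |c i| * R := norm_sum_le_of_le _ fun i _ => by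
          rw [norm_smul, Real.norm_eq_abs]
          exact mul_le_mul_of_nonneg_left (hKR _ (hg i)) (abs_nonneg _)
      _ ≤ R := by
          rw [← Finset.sum_mul]
          exact mul_le_of_le_one_left hR.le hc
  exact mem_closedBall_zero_iff.1 (hsub hx)

/-- Banach-space version of the key lemma (Lemma 3.1 of the paper). -/
theorem geometric_mean_dist_le_entropy_banach
    {X : Type*} [NormedAddCommGroup X] [NormedSpace ℝ X] [CompleteSpace X]
    (K : Set X) (hK : IsCompact K) (n : ℕ) (hn : 1 ≤ n)
    (v : Fin n → X) (hv : ∀ k, v k ∈ K) (hind : LinearIndependent ℝ v)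
    (T : (Submodule.span ℝ (Set.range v)) ≃L[ℝ] EuclideanSpace ℝ (Fin n)) :
    (∏ k : Fin n, Metric.infDist (v k) ((Submodule.span ℝ (v '' {j | j < k}) : Submodule ℝ X) : Set X))
        ^ ((n : ℝ)⁻¹)
      ≤ ‖(T : (Submodule.span ℝ (Set.range v)) →L[ℝ] EuclideanSpace ℝ (Fin n))‖ *
          ‖(T.symm : EuclideanSpace ℝ (Fin n) →L[ℝ] (Submodule.span ℝ (Set.range v)))‖ *
          (((n.factorial : ℝ) * unitBallVol n) ^ ((n : ℝ)⁻¹) *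
            entropyNumber n (symConvexHull K)) := by
  set C : ℝ := ‖(T : (Submodule.span ℝ (Set.range v)) →L[ℝ] EuclideanSpace ℝ (Fin n))‖
  set C' : ℝ := ‖(T.symm : EuclideanSpace ℝ (Fin n) →L[ℝ] (Submodule.span ℝ (Set.range v)))‖
  have hC0 : 0 ≤ C := ContinuousLinearMap.opNorm_nonneg _
  have hC'0 : 0 ≤ C' := ContinuousLinearMap.opNorm_nonneg _
  set P := ∏ k : Fin n,
    Metric.infDist (v k) ((Submodule.span ℝ (v '' {j | j < k}) : Submodule ℝ X) : Set X)
  have hP0 : 0 ≤ P := Finset.prod_nonneg fun _ _ => Metric.infDist_nonneg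
  let u : Fin n → Submodule.span ℝ (Set.range v) := fun k =>
    ⟨v k, Submodule.subset_span ⟨k, rfl⟩⟩
  let w : Fin n → EuclideanSpace ℝ (Fin n) := fun k => T (u k)
  let S : EuclideanSpace ℝ (Fin n) →L[ℝ] X :=
    (Submodule.span ℝ (Set.range v)).subtypeL ∘L
      (T.symm : EuclideanSpace ℝ (Fin n) →L[ℝ] (Submodule.span ℝ (Set.range v)))
  have hSw : ∀ k, S (w k) = v k := fun k => by simp [S, w, u]
  have hS : ‖S‖ ≤ C' := S.opNorm_le_bound hC'0 fun y =>
    (T.symm : EuclideanSpace ℝ (Fin n) →L[ℝ] (Submodule.span ℝ (Set.range v))).le_opNorm y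
  have hPw : P ≤ C' ^ n * ∏ k, ‖InnerProductSpace.gramSchmidt ℝ w k‖ := by
    calc P ≤ ∏ k, C' * ‖InnerProductSpace.gramSchmidt ℝ w k‖ := by
          refine Finset.prod_le_prod (fun _ _ => Metric.infDist_nonneg) fun k _ => ?_
          have h := infDist_span_le_opNorm_mul_norm_gramSchmidt S w k
          simp only [hSw] at h
          exact h.trans (mul_le_mul_of_nonneg_right hS (norm_nonneg _))
      _ = _ := by rw [Finset.prod_mul_distrib]; simp
  have hvw : ∀ c : Fin n → ℝ, ‖∑ k, c k • w k‖ ≤ C * ‖∑ k, c k • v k‖ := fun c => by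
    have h := (T : (Submodule.span ℝ (Set.range v)) →L[ℝ] EuclideanSpace ℝ (Fin n)).le_opNorm
      (∑ k, c k • u k)
    have hu : ((∑ k, c k • u k : Submodule.span ℝ (Set.range v)) : X) = ∑ k, c k • v k := by
      simp [u]
    rw [← Submodule.norm_coe (∑ k, c k • u k), hu] at h
    simpa only [w, map_sum, map_smul] using! h
  set N := ((n.factorial : ℝ) * unitBallVol n) ^ ((n : ℝ)⁻¹)
  have hV := unitBallVol_nonneg n
  have hN0 : 0 ≤ N := by positivity
  have hn0 : n ≠ 0 := by lia
  have hbound : ∀ ε : ℝ, 0 < ε → (∃ c : Fin (2 ^ n) → X,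
      symConvexHull K ⊆ ⋃ i, Metric.closedBall (c i) ε) →
      P ^ ((n : ℝ)⁻¹) ≤ C * C' * N * ε := by
    rintro ε hε ⟨x, hx⟩
    have h := prod_norm_gramSchmidt_le hn v w hC0 hε.le hvw x fun c hc => by
      have hmem : ∑ k, c k • v k ∈ symConvexHull K :=
        subset_closure ⟨n, c, v, hv, hc, rfl⟩
      obtain ⟨j, hj⟩ := Set.mem_iUnion.1 (hx hmem)
      exact ⟨j, mem_closedBall_iff_norm.1 hj⟩
    have hle : P ≤ (n.factorial * unitBallVol n) * (C * C' * ε) ^ n := by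
      refine hPw.trans ((mul_le_mul_of_nonneg_left h (by positivity)).trans_eq ?_)
      ring
    calc P ^ ((n : ℝ)⁻¹) ≤ ((n.factorial * unitBallVol n) * (C * C' * ε) ^ n) ^ ((n : ℝ)⁻¹) :=
          Real.rpow_le_rpow hP0 hle (by positivity)
      _ = C * C' * N * ε := by
          rw [Real.mul_rpow (by positivity) (by positivity),
            Real.pow_rpow_inv_natCast (by positivity) hn0]
          ring
  obtain ⟨R, hR, hKR⟩ := exists_forall_norm_le_symConvexHull hK.isBounded
  have hne : {ε : ℝ | 0 < ε ∧ ∃ c : Fin (2 ^ n) → X,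
      symConvexHull K ⊆ ⋃ i, Metric.closedBall (c i) ε}.Nonempty :=
    ⟨R, hR, fun _ => 0, fun x hx => Set.mem_iUnion.2
      ⟨⟨0, by positivity⟩, mem_closedBall_zero_iff.2 (hKR x hx)⟩⟩
  rw [← mul_assoc]
  have hD0 : 0 ≤ C * C' * N := by positivity
  rw [entropyNumber, ← smul_eq_mul (C * C' * N), ← Real.sInf_smul_of_nonneg hD0]
  refine le_csInf hne.smul_set ?_
  rintro _ ⟨ε, ⟨hε, hc⟩, rfl⟩
  exact hbound ε hε hc
end
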